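/- Lower enhancement via connecting paths, case p > p' (Proposition 3.2, item 2). Let (V, E, ends, α) be a finite graph with boundary condition, p ∈ (0,1), q > 0, and suppose p > p'. Let Ẽ ⊆ E be such that for every e ∈ Ẽ, the collection Γ_{E∖Ẽ}(e) is nonempty. For e ∈ Ẽ set ε̃_e := (p−p') · P_{min(p,p')}({ω : ∃ γ ∈ Γ_{E∖Ẽ}(e) with every edge of γ open in ω}), and set ε̃_e := 0 for e ∉ Ẽ. Then P_{(p'+ε̃_e)_{e∈E}} ≼ φ^α_{G,p,q}. -/

import Mathlib

open scoped Classical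

noncomputable section

namespace FKPaper

variable {V E : Type*}

/-- One-step adjacency between wired vertices through an edge in `F`. -/
def Step (ends : E → Sym2 V) (α : Setoid V) (F : Set E) (x y : Quotient α) : Prop :=
  ∃ e ∈ F, Sym2.map (Quotient.mk α) (ends e) = s(x, y)

/-- Setoid of connected components of the wired multigraph with edge set `F`. -/
def connSetoid (ends : E → Sym2 V) (α : Setoid V) (F : Set E) : Setoid (Quotient α) :=
  Relation.EqvGen.setoid (Step ends α F)

/-- Connectivity in the wired multigraph with edge set `F`. -/
def Conn (ends : E → Sym2 V) (α : Setoid V) (F : Set E) (x y : Quotient α) : Prop :=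
  (connSetoid ends α F).r x y

/-- The two endpoints of `e` are joined in the wired multigraph with edge set `F`. -/
def EndsConn (ends : E → Sym2 V) (α : Setoid V) (F : Set E) (e : E) : Prop :=
  ∀ x y : V, ends e = s(x, y) → Conn ends α F (Quotient.mk α x) (Quotient.mk α y)

/-- Number of connected components `k(ω, α)`. -/
def numComponents (ends : E → Sym2 V) (α : Setoid V) (ω : E → Bool) : ℕ :=
  Nat.card (Quotient (connSetoid ends α {e | ω e = true}))

/-- `p' = p / (p + q (1 - p))`. -/
def pPrime (p q : ℝ) : ℝ := p / (p + q * (1 - p))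

/-- Total mass of a set under a weight function. -/
def massOf {ι : Type*} [Fintype ι] (w : ι → ℝ) (A : Set ι) : ℝ :=
  ∑ x ∈ Finset.univ.filter (· ∈ A), w x

/-- Normalized probability of a set under a weight function. -/
def probOf {ι : Type*} [Fintype ι] (w : ι → ℝ) (A : Set ι) : ℝ :=
  massOf w A / massOf w Set.univ

/-- FK weight of a configuration. -/
def fkWeight [Fintype E] (ends : E → Sym2 V) (α : Setoid V) (p q : ℝ) (ω : E → Bool) : ℝ :=
  p ^ (Finset.univ.filter fun e => ω e = true).card *
    (1 - p) ^ (Finset.univ.filter fun e => ω e = false).card *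
    q ^ numComponents ends α ω

/-- The FK (random cluster) probability measure `φ^α_{G,p,q}`. -/
def fkProb [Fintype E] (ends : E → Sym2 V) (α : Setoid V) (p q : ℝ)
    (A : Set (E → Bool)) : ℝ :=
  probOf (fkWeight ends α p q) A

/-- Inhomogeneous Bernoulli weight. -/
def berWeight [Fintype E] (pe : E → ℝ) (ω : E → Bool) : ℝ :=
  ∏ e, if ω e = true then pe e else 1 - pe e

/-- Inhomogeneous Bernoulli product measure `P_{(p_e)}`. -/
def berProb [Fintype E] (pe : E → ℝ) (A : Set (E → Bool)) : ℝ :=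
  probOf (berWeight pe) A

/-- Increasing sets of configurations. -/
def Increasing (A : Set (E → Bool)) : Prop :=
  ∀ ⦃ω ω' : E → Bool⦄, ω ∈ A → (∀ e, ω e ≤ ω' e) → ω' ∈ A

/-- Stochastic domination `μ ≼ ν`. -/
def StochDom [Fintype E] (μ ν : Set (E → Bool) → ℝ) : Prop :=
  ∀ A : Set (E → Bool), Increasing A → μ A ≤ ν A

/-- `Q_F(e)`: cutsets for `e` included in `F`. -/
def Cutsets (ends : E → Sym2 V) (α : Setoid V) (F : Set E) (e : E) : Set (Set E) :=
  {χ | χ ⊆ F ∧ ¬ EndsConn ends α {e' | e' ∉ χ ∧ e' ≠ e} e}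


/-! ### Auxiliary operators -/

/-- Sum over the values of the coordinates in a list. -/
def SL : List E → ((E → Bool) → ℝ) → (E → Bool) → ℝ
  | [], h, ω => h ω
  | e :: l, h, ω => SL l h (Function.update ω e true) + SL l h (Function.update ω e false)

/-- Bernoulli average over the values of the coordinates in a list. -/
def TL (r : E → ℝ) : List E → ((E → Bool) → ℝ) → (E → Bool) → ℝ
  | [], h, ω => h ω
  | e :: l, h, ω => r e * TL r l h (Function.update ω e true)
      + (1 - r e) * TL r l h (Function.update ω e false)

/-- Pointwise monotone functions. -/
def Mon (f : (E → Bool) → ℝ) : Prop :=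
  ∀ ⦃ω ω' : E → Bool⦄, (∀ e, ω e ≤ ω' e) → f ω ≤ f ω'

lemma update_le_update {ω ω' : E → Bool} (h : ∀ e, ω e ≤ ω' e) (e : E) (b : Bool) :
    ∀ e', Function.update ω e b e' ≤ Function.update ω' e b e' := by
  intro e'
  by_cases he : e' = e
  · subst he; simp
  · simp [he, h]

lemma update_false_le_true (ω : E → Bool) (e : E) :
    ∀ e', Function.update ω e false e' ≤ Function.update ω e true e' := by
  intro e'
  by_cases he : e' = e
  · subst he; simp
  · simp [he]

lemma TL_mon (r : E → ℝ) (hr0 : ∀ e, 0 ≤ r e) (hr1 : ∀ e, r e ≤ 1) (l : List E)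
    {f : (E → Bool) → ℝ} (hf : Mon f) : Mon (TL r l f) := by
  induction l with
  | nil => exact hf
  | cons e l ih =>
    intro ω ω' h
    have h1 := ih (update_le_update h e true)
    have h2 := ih (update_le_update h e false)
    have := hr0 e
    have := hr1 e
    simp only [TL]
    have := mul_le_mul_of_nonneg_left h1 (hr0 e)
    have := mul_le_mul_of_nonneg_left h2 (sub_nonneg.2 (hr1 e))
    linarith

lemma SL_mono (l : List E) {f g : (E → Bool) → ℝ} (h : ∀ ω, f ω ≤ g ω) (ω : E → Bool) :
    SL l f ω ≤ SL l g ω := by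
  induction l generalizing ω with
  | nil => exact h ω
  | cons e l ih => exact add_le_add (ih _) (ih _)

lemma SL_add (l : List E) (f g : (E → Bool) → ℝ) (ω : E → Bool) :
    SL l (fun ω => f ω + g ω) ω = SL l f ω + SL l g ω := by
  induction l generalizing ω with
  | nil => rfl
  | cons e l ih => simp only [SL, ih]; ring

lemma SL_smul (l : List E) (c : ℝ) (f : (E → Bool) → ℝ) (ω : E → Bool) :
    SL l (fun ω => c * f ω) ω = c * SL l f ω := by
  induction l generalizing ω with
  | nil => rfl
  | cons e l ih => simp only [SL, ih]; ring

lemma SL_update (l : List E) (e : E) (he : e ∉ l) (b : Bool) (f : (E → Bool) → ℝ)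
    (ω : E → Bool) :
    SL l f (Function.update ω e b) = SL l (fun ω => f (Function.update ω e b)) ω := by
  induction l generalizing ω with
  | nil => rfl
  | cons a l ih =>
    have hne : a ≠ e := by rintro rfl; simp at he
    have hl : e ∉ l := by intro h; exact he (List.mem_cons_of_mem _ h)
    simp only [SL]
    rw [Function.update_comm hne.symm, Function.update_comm hne.symm, ih hl, ih hl]

lemma SL_eq_sum [Fintype E] (l : List E) (hl : l.Nodup) (h : (E → Bool) → ℝ) (ω : E → Bool) :
    SL l h ω = ∑ ω' ∈ Finset.univ.filter (fun ω' : E → Bool => ∀ e, e ∉ l → ω' e = ω e), h ω' := by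
  induction l generalizing ω with
  | nil =>
    have : (Finset.univ.filter (fun ω' : E → Bool => ∀ e, e ∉ ([] : List E) → ω' e = ω e)) = {ω} := by
      ext ω'
      simp [funext_iff]
    rw [this]; simp [SL]
  | cons a l ih =>
    have hal : a ∉ l := (List.nodup_cons.1 hl).1
    rw [← Finset.sum_filter_add_sum_filter_not _ (fun ω' : E → Bool => ω' a = true)]
    simp only [SL]
    rw [ih (List.nodup_cons.1 hl).2, ih (List.nodup_cons.1 hl).2]
    congr 1
    · apply Finset.sum_congr _ (fun _ _ => rfl)
      ext ω'
      simp only [Finset.mem_filter, Finset.mem_univ, true_and, List.mem_cons, not_or]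
      constructor
      · intro H
        refine ⟨fun e he => ?_, ?_⟩
        · rw [H e he.2]; simp [he.1]
        · rw [H a hal]; simp
      · rintro ⟨H, H'⟩ e he
        by_cases hea : e = a
        · subst hea; simp [H']
        · rw [H e ⟨hea, he⟩]; simp [hea]
    · apply Finset.sum_congr _ (fun _ _ => rfl)
      ext ω'
      simp only [Finset.mem_filter, Finset.mem_univ, true_and, List.mem_cons, not_or]
      constructor
      · intro H
        refine ⟨fun e he => ?_, ?_⟩
        · rw [H e he.2]; simp [he.1]
        · rw [H a hal]; simp
      · rintro ⟨H, H'⟩ e he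
        by_cases hea : e = a
        · subst hea; simpa using H'
        · rw [H e ⟨hea, he⟩]; simp [hea]

lemma SL_full [Fintype E] (l : List E) (hl : l.Nodup) (hm : ∀ e, e ∈ l) (h : (E → Bool) → ℝ)
    (ω : E → Bool) : SL l h ω = ∑ ω', h ω' := by
  rw [SL_eq_sum l hl]
  congr 1
  ext ω'
  simp [hm]

/-- Sequential domination. -/
lemma seq_dom (w : (E → Bool) → ℝ) (r : E → ℝ) (hr0 : ∀ e, 0 ≤ r e) (hr1 : ∀ e, r e ≤ 1)
    {f : (E → Bool) → ℝ} (hf : Mon f) (l : List E)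
    (hc : ∀ e l', e :: l' <:+ l → ∀ ω,
      r e * (SL l' w (Function.update ω e true) + SL l' w (Function.update ω e false))
        ≤ SL l' w (Function.update ω e true)) (ω : E → Bool) :
    SL l w ω * TL r l f ω ≤ SL l (fun ω => w ω * f ω) ω := by
  induction l generalizing ω with
  | nil => exact le_rfl
  | cons e l ih =>
    have ih' := ih (fun e' l' h => hc e' l' (h.trans (List.suffix_cons e l)))
    have h1 := ih' (Function.update ω e true)
    have h2 := ih' (Function.update ω e false)
    have h3 := hc e l List.suffix_rfl ω
    have h4 := TL_mon r hr0 hr1 l hf (update_false_le_true ω e)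
    simp only [SL, TL]
    nlinarith [mul_nonneg (sub_nonneg.2 h3) (sub_nonneg.2 h4)]

lemma seq_eq (w : (E → Bool) → ℝ) (r : E → ℝ) (f : (E → Bool) → ℝ) (l : List E) (hl : l.Nodup)
    (hc : ∀ e ω, r e * (w (Function.update ω e true) + w (Function.update ω e false))
        = w (Function.update ω e true)) (ω : E → Bool) :
    SL l w ω * TL r l f ω = SL l (fun ω => w ω * f ω) ω := by
  induction l generalizing ω with
  | nil => rfl
  | cons e l ih =>
    have hl' := List.nodup_cons.1 hl
    have h1 := ih hl'.2 (Function.update ω e true)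
    have h2 := ih hl'.2 (Function.update ω e false)
    have h3 : r e * (SL l w (Function.update ω e true) + SL l w (Function.update ω e false))
        = SL l w (Function.update ω e true) := by
      rw [SL_update l e hl'.1, SL_update l e hl'.1, ← SL_add, ← SL_smul]
      congr 1
      funext ω
      exact hc e ω
    simp only [SL, TL]
    rw [← h1, ← h2]
    linear_combination (TL r l f (Function.update ω e true)
      - TL r l f (Function.update ω e false)) * h3

lemma TL_congr_off (r : E → ℝ) (l : List E) (g : (E → Bool) → ℝ) (F : Set E)
    (hg : ∀ ω ω' : E → Bool, (∀ e ∈ F, ω e = ω' e) → g ω = g ω')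
    (ω ω' : E → Bool) (h : ∀ e ∈ F, e ∉ l → ω e = ω' e) : TL r l g ω = TL r l g ω' := by
  induction l generalizing ω ω' with
  | nil => exact hg _ _ (fun e he => h e he (by simp))
  | cons a l ih =>
    have key : ∀ b : Bool, TL r l g (Function.update ω a b) = TL r l g (Function.update ω' a b) := by
      intro b
      apply ih
      intro e he hel
      by_cases hea : e = a
      · subst hea; simp
      · simp [hea, h e he (by simp [hea, hel])]
    simp only [TL, key]

lemma TL_const (r : E → ℝ) (l : List E) (c : ℝ) (ω : E → Bool) : TL r l (fun _ => c) ω = c := by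
  induction l generalizing ω with
  | nil => rfl
  | cons a l ih => simp only [TL, ih]; ring

lemma TL_append (r : E → ℝ) (l l' : List E) (f : (E → Bool) → ℝ) (ω : E → Bool) :
    TL r (l ++ l') f ω = TL r l (TL r l' f) ω := by
  induction l generalizing ω with
  | nil => rfl
  | cons a l ih => simp only [TL, List.cons_append, ih]

/-- Indicator. -/
def ind (A : Set (E → Bool)) (ω : E → Bool) : ℝ := if ω ∈ A then 1 else 0

lemma probOf_eq [Fintype E] (w : (E → Bool) → ℝ) (A : Set (E → Bool)) :
    probOf w A = (∑ ω, w ω * ind A ω) / ∑ ω, w ω := by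
  unfold probOf massOf ind
  congr 1
  · rw [Finset.sum_filter]; simp
  · simp

lemma ind_mon {A : Set (E → Bool)} (hA : Increasing A) : Mon (ind A) := by
  intro ω ω' h
  unfold ind
  by_cases h1 : ω ∈ A
  · simp [h1, hA h1 h]
  · rw [if_neg h1]; split_ifs <;> norm_num

lemma berWeight_update [Fintype E] (r : E → ℝ) (ω : E → Bool) (e : E) (b : Bool) :
    berWeight r (Function.update ω e b) = (if b = true then r e else 1 - r e) *
      ∏ e' ∈ Finset.univ.erase e, (if ω e' = true then r e' else 1 - r e') := by
  unfold berWeight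
  rw [← Finset.mul_prod_erase _ _ (Finset.mem_univ e)]
  congr 1
  · simp
  · apply Finset.prod_congr rfl
    intro e' he'
    simp [(Finset.mem_erase.1 he').1]

lemma berWeight_pos [Fintype E] (r : E → ℝ) (hr0 : ∀ e, 0 < r e) (hr1 : ∀ e, r e < 1)
    (ω : E → Bool) : 0 < berWeight r ω := by
  apply Finset.prod_pos
  intro e _
  split_ifs
  · exact hr0 e
  · linarith [hr1 e]

lemma berProb_eq [Fintype E] (r : E → ℝ) (hr0 : ∀ e, 0 < r e) (hr1 : ∀ e, r e < 1)
    (A : Set (E → Bool)) (l : List E) (hl : l.Nodup) (hm : ∀ e, e ∈ l) (ω : E → Bool) :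
    berProb r A = TL r l (ind A) ω := by
  unfold berProb
  rw [probOf_eq, ← SL_full l hl hm _ ω, ← SL_full l hl hm _ ω,
    ← seq_eq (berWeight r) r (ind A) l hl]
  · have : 0 < SL l (berWeight r) ω := by
      rw [SL_full l hl hm]
      exact Finset.sum_pos (fun _ _ => berWeight_pos r hr0 hr1 _) ⟨ω, Finset.mem_univ _⟩
    field_simp
  · intro e ω
    rw [berWeight_update, berWeight_update]
    simp only [if_true, Bool.false_eq_true, if_false]
    ring

/-! ### Components -/

lemma Step_mono (ends : E → Sym2 V) (α : Setoid V) {F F' : Set E} (h : F ⊆ F')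
    {x y : Quotient α} (hs : Step ends α F x y) : Step ends α F' x y := by
  obtain ⟨e, he, h'⟩ := hs
  exact ⟨e, h he, h'⟩

lemma connSetoid_le (ends : E → Sym2 V) (α : Setoid V) {F : Set E} (s : Setoid (Quotient α))
    (h : ∀ x y, Step ends α F x y → s x y) : connSetoid ends α F ≤ s := by
  intro x y hxy
  have hxy' : Relation.EqvGen (Step ends α F) x y := hxy
  induction hxy' with
  | rel x y hh => exact h x y hh
  | refl x => exact s.refl x
  | symm x y _ ih => exact s.symm (ih (by assumption))
  | trans x y z _ _ ih1 ih2 => exact s.trans (ih1 (by assumption)) (ih2 (by assumption))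

lemma connSetoid_mono (ends : E → Sym2 V) (α : Setoid V) {F F' : Set E} (h : F ⊆ F') :
    connSetoid ends α F ≤ connSetoid ends α F' :=
  connSetoid_le ends α _ (fun _ _ hs => Relation.EqvGen.rel _ _ (Step_mono ends α h hs))

lemma EndsConn_mono (ends : E → Sym2 V) (α : Setoid V) {F F' : Set E} (h : F ⊆ F') (e : E)
    (hc : EndsConn ends α F e) : EndsConn ends α F' e :=
  fun x y hxy => connSetoid_mono ends α h (hc x y hxy)

/-- The setoid obtained by merging two classes. -/
def mergeSetoid {X : Type*} (s : Setoid X) (x y : X) : Setoid X where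
  r a b := s a b ∨ ((s a x ∨ s a y) ∧ (s b x ∨ s b y))
  iseqv := by
    refine ⟨fun a => Or.inl (s.refl a), ?_, ?_⟩
    · rintro a b (h | h)
      · exact Or.inl (s.symm h)
      · exact Or.inr ⟨h.2, h.1⟩
    · rintro a b c (h | h) (h' | h')
      · exact Or.inl (s.trans h h')
      · exact Or.inr ⟨h'.1.imp (s.trans h) (s.trans h), h'.2⟩
      · exact Or.inr ⟨h.1, h.2.imp (s.trans (s.symm h')) (s.trans (s.symm h'))⟩
      · exact Or.inr ⟨h.1, h'.2⟩

lemma step_insert (ends : E → Sym2 V) (α : Setoid V) {F F' : Set E} (e : E)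
    (hF : F' ⊆ insert e F) {a b : Quotient α} (x y : V) (hxy : ends e = s(x, y))
    (h : Step ends α F' a b) : Step ends α F a b ∨
      (a = Quotient.mk α x ∧ b = Quotient.mk α y) ∨ (a = Quotient.mk α y ∧ b = Quotient.mk α x) := by
  obtain ⟨e', he', h'⟩ := h
  rcases hF he' with rfl | h''
  · right
    rw [hxy, Sym2.map_mk, Sym2.eq_iff] at h'
    rcases h' with ⟨h1, h2⟩ | ⟨h1, h2⟩
    · exact Or.inl ⟨h1.symm, h2.symm⟩
    · exact Or.inr ⟨h2.symm, h1.symm⟩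
  · exact Or.inl ⟨e', h'', h'⟩

lemma card_le_succ [Finite V] (ends : E → Sym2 V) (α : Setoid V) {F F' : Set E} (e : E)
    (hF : F' ⊆ insert e F) :
    Nat.card (Quotient (connSetoid ends α F)) ≤ Nat.card (Quotient (connSetoid ends α F')) + 1 := by
  obtain ⟨x, y, hxy⟩ : ∃ x y, ends e = s(x, y) := by
    induction h : ends e using Sym2.ind with
    | _ x y => exact ⟨x, y, rfl⟩
  have hle : connSetoid ends α F' ≤
      mergeSetoid (connSetoid ends α F) (Quotient.mk α x) (Quotient.mk α y) := by
    apply connSetoid_le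
    intro a b hab
    rcases step_insert ends α e hF x y hxy hab with h | ⟨rfl, rfl⟩ | ⟨rfl, rfl⟩
    · exact Or.inl (Relation.EqvGen.rel _ _ h)
    · exact Or.inr ⟨Or.inl (Setoid.refl' _ _), Or.inr (Setoid.refl' _ _)⟩
    · exact Or.inr ⟨Or.inr (Setoid.refl' _ _), Or.inl (Setoid.refl' _ _)⟩
  let g : Quotient (connSetoid ends α F) → Option (Quotient (connSetoid ends α F')) := fun c =>
    if c = Quotient.mk _ (Quotient.mk α x) then none else some (Quotient.mk _ c.out)
  have hg : Function.Injective g := by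
    intro c d hcd
    by_cases hc : c = Quotient.mk _ (Quotient.mk α x)
    · by_cases hd : d = Quotient.mk _ (Quotient.mk α x)
      · rw [hc, hd]
      · simp [g, hc, hd] at hcd
    · by_cases hd : d = Quotient.mk _ (Quotient.mk α x)
      · simp [g, hc, hd] at hcd
      · simp only [g, hc, hd, if_false, Option.some.injEq] at hcd
        have hcd' := hle (Quotient.exact hcd)
        have key : ∀ c : Quotient (connSetoid ends α F), c ≠ Quotient.mk _ (Quotient.mk α x) →
            ¬ (connSetoid ends α F) c.out (Quotient.mk α x) := by
          intro c hc h
          apply hc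
          rw [← Quotient.out_eq c]
          exact Quotient.sound h
        have hcd2 : (connSetoid ends α F) c.out d.out := by
          rcases hcd' with h | ⟨h1 | h1, h2 | h2⟩
          · exact h
          · exact absurd h1 (key c hc)
          · exact absurd h1 (key c hc)
          · exact absurd h2 (key d hd)
          · exact Setoid.trans' _ h1 (Setoid.symm' _ h2)
        rw [← Quotient.out_eq c, ← Quotient.out_eq d]
        exact Quotient.sound hcd2
  have := Nat.card_le_card_of_injective g hg
  rwa [Finite.card_option] at this

lemma card_eq_of_conn (ends : E → Sym2 V) (α : Setoid V) {F F' : Set E} (e : E)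
    (hF : F' ⊆ insert e F) (hFF : F ⊆ F') (hc : EndsConn ends α F e) :
    connSetoid ends α F = connSetoid ends α F' := by
  obtain ⟨x, y, hxy⟩ : ∃ x y, ends e = s(x, y) := by
    induction h : ends e using Sym2.ind with
    | _ x y => exact ⟨x, y, rfl⟩
  apply le_antisymm (connSetoid_mono ends α hFF)
  apply connSetoid_le
  intro a b hab
  have h0 : (connSetoid ends α F) (Quotient.mk α x) (Quotient.mk α y) := hc x y hxy
  rcases step_insert ends α e hF x y hxy hab with h | ⟨rfl, rfl⟩ | ⟨rfl, rfl⟩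
  · exact Relation.EqvGen.rel _ _ h
  · exact h0
  · exact Setoid.symm' _ h0

/-! ### FK weights -/

lemma fkWeight_eq [Fintype E] (ends : E → Sym2 V) (α : Setoid V) (p q : ℝ) (ω : E → Bool) :
    fkWeight ends α p q ω = berWeight (fun _ => p) ω * q ^ numComponents ends α ω := by
  unfold fkWeight berWeight
  rw [Finset.prod_ite, Finset.prod_const, Finset.prod_const]
  simp

lemma open_update_sub (ω : E → Bool) (e : E) :
    {e' | Function.update ω e true e' = true} ⊆
      insert e {e' | Function.update ω e false e' = true} := by
  intro e' he'
  by_cases h : e' = e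
  · exact Or.inl h
  · right; simpa [h] using he'

lemma open_update_sub' (ω : E → Bool) (e : E) :
    {e' | Function.update ω e false e' = true} ⊆ {e' | Function.update ω e true e' = true} := by
  intro e' he'
  by_cases h : e' = e
  · subst h; simp at he'
  · simpa [h] using he'

lemma fk_pos [Fintype E] (ends : E → Sym2 V) (α : Setoid V)
    (p q : ℝ) (hp : p ∈ Set.Ioo (0 : ℝ) 1) (hq : 0 < q) (ω : E → Bool) :
    0 < fkWeight ends α p q ω := by
  rw [fkWeight_eq]
  exact mul_pos (berWeight_pos _ (fun _ => hp.1) (fun _ => hp.2) ω) (pow_pos hq _)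

lemma fk_conn [Fintype V] [Fintype E] (ends : E → Sym2 V) (α : Setoid V)
    (p q : ℝ) (e : E) (ω : E → Bool)
    (hc : EndsConn ends α {e' | Function.update ω e false e' = true} e) :
    p * (fkWeight ends α p q (Function.update ω e true)
      + fkWeight ends α p q (Function.update ω e false))
      = fkWeight ends α p q (Function.update ω e true) := by
  have hk : numComponents ends α (Function.update ω e false)
      = numComponents ends α (Function.update ω e true) := by
    unfold numComponents
    rw [card_eq_of_conn ends α e (open_update_sub ω e) (open_update_sub' ω e) hc]
  rw [fkWeight_eq, fkWeight_eq, berWeight_update, berWeight_update, hk]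
  simp
  ring

lemma fk_any [Fintype V] [Fintype E] (ends : E → Sym2 V) (α : Setoid V)
    (p q : ℝ) (hp : p ∈ Set.Ioo (0 : ℝ) 1) (hq : 1 ≤ q) (e : E) (ω : E → Bool) :
    pPrime p q * (fkWeight ends α p q (Function.update ω e true)
      + fkWeight ends α p q (Function.update ω e false))
      ≤ fkWeight ends α p q (Function.update ω e true) := by
  have hk : numComponents ends α (Function.update ω e false)
      ≤ numComponents ends α (Function.update ω e true) + 1 :=
    card_le_succ ends α e (open_update_sub ω e)
  have hk2 := pow_le_pow_right₀ hq hk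
  rw [fkWeight_eq, fkWeight_eq, berWeight_update, berWeight_update]
  have hB : 0 ≤ ∏ e' ∈ Finset.univ.erase e, (if ω e' = true then p else 1 - p) := by
    apply Finset.prod_nonneg
    intro e _
    split_ifs
    · exact hp.1.le
    · linarith [hp.2]
  simp only [if_true, Bool.false_eq_true, if_false]
  set B := ∏ e' ∈ Finset.univ.erase e, (if ω e' = true then p else 1 - p)
  set a := numComponents ends α (Function.update ω e true)
  set b := numComponents ends α (Function.update ω e false)
  unfold pPrime
  have h1p : 0 < 1 - p := by linarith [hp.2]
  have hd : 0 < p + q * (1 - p) := by have := mul_pos (lt_of_lt_of_le one_pos hq) h1p; linarith [hp.1]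
  rw [div_mul_eq_mul_div, div_le_iff₀ hd]
  rw [pow_succ] at hk2
  have := mul_le_mul_of_nonneg_left hk2 (mul_nonneg (mul_nonneg hp.1.le h1p.le) hB)
  nlinarith [this]


/-- **Proposition 3.2, item 2** (lower enhancement via connecting paths, case `p > p'`). -/
theorem below_enhancement_of_gt_paths
    {V E : Type*} [Fintype V] [Fintype E]
    (ends : E → Sym2 V) (α : Setoid V)
    (p q : ℝ) (hp : p ∈ Set.Ioo (0 : ℝ) 1) (hq : 0 < q)
    (hpp' : pPrime p q < p)
    (Etilde : Set E)
    (hpath : ∀ e ∈ Etilde, EndsConn ends α Etildeᶜ e)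
    (εtilde : E → ℝ)
    (hε : ∀ e, εtilde e =
      if e ∈ Etilde then
        (p - pPrime p q) *
          berProb (fun _ => min p (pPrime p q))
            {ω | EndsConn ends α (Etildeᶜ ∩ {e' | ω e' = true}) e}
      else 0) :
    StochDom (berProb fun e => pPrime p q + εtilde e) (fkProb ends α p q) := by
  have hp0 := hp.1
  have hp1 := hp.2
  have h1p : 0 < 1 - p := by linarith
  have hd : 0 < p + q * (1 - p) := by have := mul_pos hq h1p; linarith
  have hp'0 : 0 < pPrime p q := div_pos hp0 hd
  have hp'1 : pPrime p q < 1 := hpp'.trans hp1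
  have hq1 : 1 ≤ q := by
    have h := hpp'
    unfold pPrime at h
    rw [div_lt_iff₀ hd] at h
    by_contra hcon
    push Not at hcon
    nlinarith [mul_pos (mul_pos hp0 h1p) (sub_pos.2 hcon)]
  rw [min_eq_right hpp'.le] at hε
  set p' := pPrime p q with hp'
  set w := fkWeight ends α p q with hw
  have chain0 : ∀ (e : E) (l : List E), e ∉ l → ∀ ω,
      p' * (SL l w (Function.update ω e true) + SL l w (Function.update ω e false))
        ≤ SL l w (Function.update ω e true) := by
    intro e l he ω
    rw [SL_update l e he, SL_update l e he, ← SL_add, ← SL_smul]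
    exact SL_mono l (fun ω => fk_any ends α p q hp hq1 e ω) ω
  let C : E → Set (E → Bool) := fun e => {ω | EndsConn ends α (Etildeᶜ ∩ {e' | ω e' = true}) e}
  have hCinc : ∀ e, Increasing (C e) := by
    intro e ω ω' h hle
    refine EndsConn_mono ends α ?_ e h
    rintro e' ⟨h1, h2⟩
    refine ⟨h1, ?_⟩
    have := hle e'
    simp only [Set.mem_ofPred_eq] at h2 ⊢
    rw [h2] at this
    exact top_le_iff.1 this
  have hCdep : ∀ e, ∀ ω ω' : E → Bool, (∀ e ∈ Etildeᶜ, ω e = ω' e) →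
      ind (C e) ω = ind (C e) ω' := by
    intro e ω ω' h
    have : Etildeᶜ ∩ {e' | ω e' = true} = Etildeᶜ ∩ {e' | ω' e' = true} := by
      ext e'
      simp only [Set.mem_inter_iff, Set.mem_ofPred_eq]
      constructor
      · rintro ⟨h1, h2⟩; exact ⟨h1, by rw [← h e' h1]; exact h2⟩
      · rintro ⟨h1, h2⟩; exact ⟨h1, by rw [h e' h1]; exact h2⟩
    simp only [ind, C, Set.mem_ofPred_eq, this]
  have hTC : ∀ e (l : List E), l.Nodup → (∀ e' ∈ Etildeᶜ, e' ∈ l) → ∀ ω,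
      TL (fun _ => p') l (ind (C e)) ω = berProb (fun _ => p') (C e) := by
    intro e l hl hFl ω
    let m := (Finset.univ.filter (fun e' => e' ∉ l)).toList
    have hconst : TL (fun _ => p') l (ind (C e)) =
        fun _ => TL (fun _ => p') l (ind (C e)) ω := by
      funext ω'
      exact TL_congr_off _ l _ Etildeᶜ (hCdep e) _ _ (fun e' he' hn => absurd (hFl e' he') hn)
    rw [berProb_eq (fun _ => p') (fun _ => hp'0) (fun _ => hp'1) (C e) (m ++ l) _ _ ω,
      TL_append, hconst, TL_const]
    · rw [List.nodup_append]
      refine ⟨Finset.nodup_toList _, hl, ?_⟩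
      intro a ha b hb hab
      subst hab
      simp [m] at ha
      exact ha hb
    · intro e'
      by_cases h : e' ∈ l <;> simp [m, h]
  have hb0 : ∀ e, 0 ≤ berProb (fun _ => p') (C e) := by
    intro e
    unfold berProb
    rw [probOf_eq]
    refine div_nonneg (Finset.sum_nonneg fun ω _ => mul_nonneg
      (berWeight_pos _ (fun _ => hp'0) (fun _ => hp'1) ω).le ?_)
      (Finset.sum_nonneg fun ω _ => (berWeight_pos _ (fun _ => hp'0) (fun _ => hp'1) ω).le)
    unfold ind; split_ifs <;> norm_num
  have hb1 : ∀ e, berProb (fun _ => p') (C e) ≤ 1 := by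
    intro e
    unfold berProb
    rw [probOf_eq]
    refine div_le_one_of_le₀ (Finset.sum_le_sum fun ω _ => ?_)
      (Finset.sum_nonneg fun ω _ => (berWeight_pos _ (fun _ => hp'0) (fun _ => hp'1) ω).le)
    have := (berWeight_pos (fun _ : E => p') (fun _ => hp'0) (fun _ => hp'1) ω).le
    unfold ind; split_ifs
    · simp
    · simpa using this
  set r : E → ℝ := fun e => p' + εtilde e with hr
  have hε0 : ∀ e, 0 ≤ εtilde e := by
    intro e
    rw [hε e]
    split_ifs
    · exact mul_nonneg (by linarith) (hb0 e)
    · exact le_rfl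
  have hε1 : ∀ e, εtilde e ≤ p - p' := by
    intro e
    rw [hε e]
    split_ifs
    · exact mul_le_of_le_one_right (by linarith) (hb1 e)
    · linarith
  have hr0 : ∀ e, 0 < r e := fun e => by have := hε0 e; simp only [hr]; linarith
  have hr1 : ∀ e, r e < 1 := fun e => by have := hε1 e; simp only [hr]; linarith
  have chain1 : ∀ (e : E) (l : List E), e ∈ Etilde → e ∉ l → l.Nodup → (∀ e' ∈ Etildeᶜ, e' ∈ l) →
      ∀ ω, r e * (SL l w (Function.update ω e true) + SL l w (Function.update ω e false))
        ≤ SL l w (Function.update ω e true) := by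
    intro e l heE he hl hFl ω
    have hdom : ∀ ω, SL l w ω * berProb (fun _ => p') (C e)
        ≤ SL l (fun ω => w ω * ind (C e) ω) ω := by
      intro ω
      rw [← hTC e l hl hFl ω]
      refine seq_dom w (fun _ => p') (fun _ => hp'0.le) (fun _ => hp'1.le) (ind_mon (hCinc e)) l ?_ ω
      intro a l' hs ω
      exact chain0 a l' (List.nodup_cons.1 (hl.sublist hs.sublist)).1 ω
    have h1 := hdom (Function.update ω e true)
    have h2 := hdom (Function.update ω e false)
    have h3 : p' * (SL l w (Function.update ω e true) + SL l w (Function.update ω e false))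
        + (p - p') * (SL l (fun ω => w ω * ind (C e) ω) (Function.update ω e true)
          + SL l (fun ω => w ω * ind (C e) ω) (Function.update ω e false))
        ≤ SL l w (Function.update ω e true) := by
      rw [SL_update l e he, SL_update l e he, SL_update l e he, SL_update l e he,
        ← SL_add, ← SL_add, ← SL_smul, ← SL_smul, ← SL_add]
      refine SL_mono l (fun ω => ?_) ω
      have hdep : ∀ b, ind (C e) (Function.update ω e b) = ind (C e) ω := by
        intro b
        apply hCdep
        intro e' he'
        have : e' ≠ e := by rintro rfl; exact he' heE
        simp [this]
      rw [hdep, hdep]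
      by_cases hC : ω ∈ C e
      · have hi : ind (C e) ω = 1 := by simp [ind, hC]
        have := fk_conn ends α p q e ω (by
          refine EndsConn_mono ends α ?_ e hC
          rintro e' ⟨k1, k2⟩
          have hne : e' ≠ e := fun hh => k1 (hh ▸ heE)
          simpa [hne] using k2)
        rw [hi]
        rw [← hw] at this
        linarith
      · have hi : ind (C e) ω = 0 := by simp [ind, hC]
        have := fk_any ends α p q hp hq1 e ω
        rw [hi]
        rw [← hw, ← hp'] at this
        linarith
    have h4 : r e = p' + (p - p') * berProb (fun _ => p') (C e) := by
      simp only [hr, hε e, if_pos heE, C]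
    rw [h4]
    have := mul_le_mul_of_nonneg_left (add_le_add h1 h2) (sub_nonneg.2 hpp'.le)
    linarith
  let l1 := (Finset.univ.filter (fun e => e ∈ Etilde)).toList
  let l2 := (Finset.univ.filter (fun e => e ∉ Etilde)).toList
  have hnd : (l1 ++ l2).Nodup := by
    rw [List.nodup_append]
    refine ⟨Finset.nodup_toList _, Finset.nodup_toList _, ?_⟩
    intro a ha b hb hab
    subst hab
    simp [l1] at ha
    simp [l2] at hb
    exact hb ha
  have hmem : ∀ e, e ∈ l1 ++ l2 := by
    intro e
    by_cases h : e ∈ Etilde <;> simp [l1, l2, h]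
  have hchain : ∀ e l', e :: l' <:+ l1 ++ l2 → ∀ ω,
      r e * (SL l' w (Function.update ω e true) + SL l' w (Function.update ω e false))
        ≤ SL l' w (Function.update ω e true) := by
    intro e l' hs ω
    have hn := List.nodup_cons.1 (hnd.sublist hs.sublist)
    by_cases heE : e ∈ Etilde
    · refine chain1 e l' heE hn.1 hn.2 ?_ ω
      have hs2 : l2 <:+ l1 ++ l2 := List.suffix_append l1 l2
      have hs3 : l2 <:+ e :: l' := by
        rcases List.suffix_or_suffix_of_suffix hs hs2 with h | h
        · have : e ∈ l2 := h.subset (by simp)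
          simp [l2] at this
          exact absurd heE this
        · exact h
      intro e' he'
      have h5 : e' ∈ e :: l' := hs3.subset (by simpa [l2] using he')
      rcases List.mem_cons.1 h5 with rfl | h6
      · exact absurd heE he'
      · exact h6
    · have : r e = p' := by simp [hr, hε e, heE]
      rw [this]
      exact chain0 e l' hn.1 ω
  intro A hA
  have hfin := seq_dom w r (fun e => (hr0 e).le) (fun e => (hr1 e).le) (ind_mon hA) (l1 ++ l2)
    hchain (fun _ => true)
  rw [← berProb_eq r hr0 hr1 A _ hnd hmem, SL_full _ hnd hmem, SL_full _ hnd hmem] at hfin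
  unfold fkProb
  rw [probOf_eq, le_div_iff₀ (Finset.sum_pos (fun ω _ => fk_pos ends α p q hp hq ω)
    ⟨fun _ => true, Finset.mem_univ _⟩), mul_comm]
  exact hfin

end FKPaper
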